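/- Let U ⊆ ℂ be an open set containing (α₀, 0), let z = x + iy : U → ℂ be holomorphic, ψ : U → ℝ smooth (C^∞), and G, B real constants with G ≠ 0. Assume: (a) ψ(α,0) = 0 for all α with (α,0) ∈ U; (b) ψ_β(α,0) = √(2(B − G·y(α,0))·(x_α(α,0)² + y_α(α,0)²)) for all α with (α,0) ∈ U; (c) x_α(α₀,0) = 0; (d) y_α(α₀,0) > 0; (e) B − G·y(α₀,0) > 0. Let k ≥ 2 be the least integer with ∂_α^k x(α₀,0) ≠ 0, and assume k is even (so α ↦ x(α,0) has a local extremum at α₀). Define F := ψ_α y_α + ψ_β x_α. Then there exist ε > 0 and a C¹ function h : (α₀ − ε, α₀ + ε) → ℝ with h(α₀) = 0 such that for (α,β) with |α − α₀| < ε, |β| < ε: F(α,β) = 0 if and only if β = h(α); and there is ε' ∈ (0, ε] such that h is nonzero on the punctured interval 0 < |α − α₀| < ε' and takes opposite (strict) signs on the two sides of α₀. In particular the critical layer touches the point (α₀,0) both from inside the fluid domain {β < 0} and from outside it. -/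

import Mathlib

/-- The numerator `ψ_α y_α + ψ_β x_α` of the horizontal fluid velocity, in conformal
coordinates, where `ℂ` is identified with `ℝ²` via `ζ = α + iβ`, `x = Re z`, `y = Im z`. -/
noncomputable def FnumC (z : ℂ → ℂ) (ψ : ℂ → ℝ) : ℂ → ℝ := fun ζ =>
  fderiv ℝ ψ ζ 1 * fderiv ℝ (fun w => (z w).im) ζ 1
    + fderiv ℝ ψ ζ Complex.I * fderiv ℝ (fun w => (z w).re) ζ 1

open Filter Topology

/-- Implicit function theorem for a real equation `f (α, β) = 0` in the plane, together with the
sign of the implicit function where `f` does not vanish on the axis `β = 0`. -/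
lemma exists_implicit_function_sign {f : ℝ × ℝ → ℝ} {a c : ℝ}
    (hf : ContDiffAt ℝ 1 f (a, 0)) (h0 : f (a, 0) = 0)
    (hc : fderiv ℝ f (a, 0) (0, 1) = c) (hc0 : c ≠ 0) :
    ∃ h : ℝ → ℝ, ContDiffAt ℝ 1 h a ∧ h a = 0 ∧
      (∀ᶠ v : ℝ × ℝ in 𝓝 (a, 0), f v = 0 ↔ v.2 = h v.1) ∧
      ∀ᶠ α in 𝓝 a, f (α, 0) ≠ 0 → f (α, 0) * c * h α < 0 := by
  have hval : ∀ t : ℝ, fderiv ℝ f (a, 0) (0, t) = t * c := fun t => by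
    rw [← hc, ← smul_eq_mul, ← map_smul]
    simp
  have hinv : (fderiv ℝ f (a, 0) ∘L .inr ℝ ℝ ℝ).IsInvertible :=
    ⟨ContinuousLinearEquiv.unitsEquivAut ℝ (Units.mk0 c hc0), by
      ext
      simp [hval]⟩
  have hcd := hf.contDiffAt_implicitFunction one_ne_zero hinv
  have hself := hf.implicitFunction_apply_self one_ne_zero hinv
  have hzero := hf.eventually_apply_implicitFunction one_ne_zero hinv
  have hiff := hf.eventually_apply_eq_iff_implicitFunction one_ne_zero hinv
  set h := hf.implicitFunction one_ne_zero hinv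
  simp only [h0] at hcd hself hzero hiff
  refine ⟨h, hcd, hself, ?_, ?_⟩
  · filter_upwards [hiff] with v hv
    rw [hv, eq_comm]
  have hlim : Tendsto (fun α : ℝ => (((α, 0) : ℝ × ℝ), ((α, h α) : ℝ × ℝ))) (𝓝 a)
      (𝓝 ((a, 0), (a, 0))) := by
    have hh : Tendsto h (𝓝 a) (𝓝 0) := hself ▸ hcd.continuousAt.tendsto
    exact (tendsto_id.prodMk_nhds tendsto_const_nhds).prodMk_nhds (tendsto_id.prodMk_nhds hh)
  have hstrict := (hf.hasStrictFDerivAt one_ne_zero).isLittleO.bound (half_pos (abs_pos.2 hc0))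
  filter_upwards [hlim.eventually hstrict, hzero] with α hα hα0 hne
  have hsub : ((α, 0) : ℝ × ℝ) - (α, h α) = (0, -h α) := by simp
  have hnorm : ‖((0, -h α) : ℝ × ℝ)‖ = |h α| := by simp [Prod.norm_def]
  simp only [hsub, hnorm, hα0, hval, Real.norm_eq_abs, sub_zero] at hα
  have hh : h α ≠ 0 := by
    intro hh
    simp [hh, hne] at hα
  have hsq : (f (α, 0) + h α * c) ^ 2 ≤ (|c| / 2 * |h α|) ^ 2 := by
    rw [← sq_abs]
    gcongr
    simpa using hα
  have hpos : 0 < c ^ 2 * h α ^ 2 := by positivity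
  have habs : (|c| / 2 * |h α|) ^ 2 = c ^ 2 * h α ^ 2 / 4 := by
    rw [mul_pow, div_pow, sq_abs, sq_abs]
    ring
  nlinarith [sq_nonneg (f (α, 0))]

/-- If the first nonvanishing derivative of positive order of a real analytic function has even
order, then its derivative changes sign. -/
lemma exists_deriv_mul_sub_pos {g : ℝ → ℝ} {a : ℝ} (hg : AnalyticAt ℝ g a) {k : ℕ} (hk : 1 ≤ k)
    (hmin : ∀ j, 1 ≤ j → j < k → iteratedDeriv j g a = 0) (hne : iteratedDeriv k g a ≠ 0)
    (heven : Even k) :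
    ∃ q : ℝ, q ≠ 0 ∧ ∀ᶠ α in 𝓝 a, α ≠ a → 0 < deriv g α * q * (α - a) := by
  obtain ⟨n, rfl⟩ : ∃ n, k = n + 1 := ⟨k - 1, by omega⟩
  have hord : analyticOrderAt (deriv g) a = n := by
    rw [analyticOrderAt_eq_nat_iff_iteratedDeriv_eq_zero hg.deriv]
    simp only [← iteratedDeriv_succ']
    exact ⟨fun j hj => hmin _ (by omega) (by omega), hne⟩
  obtain ⟨p, hp, hp0, hgp⟩ := hg.deriv.analyticOrderAt_eq_natCast.1 hord
  have hpq : ∀ᶠ α in 𝓝 a, 0 < p α * p a :=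
    (hp.continuousAt.mul continuousAt_const).eventually_const_lt (mul_self_pos.2 hp0)
  refine ⟨p a, hp0, ?_⟩
  filter_upwards [hgp, hpq] with α h1 h2 hα
  have hpow : 0 < (α - a) ^ (n + 1) := heven.pow_pos (sub_ne_zero.2 hα)
  rw [h1, smul_eq_mul]
  calc 0 < (α - a) ^ (n + 1) * (p α * p a) := mul_pos hpow h2
    _ = _ := by ring

lemma hasFDerivAt_re_im {z : ℂ → ℂ} {ζ z' : ℂ} (hz : HasDerivAt z z' ζ) :
    HasFDerivAt (fun w => (z w).re) (Complex.reCLM ∘L (z' • (1 : ℂ →L[ℝ] ℂ))) ζ ∧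
    HasFDerivAt (fun w => (z w).im) (Complex.imCLM ∘L (z' • (1 : ℂ →L[ℝ] ℂ))) ζ :=
  ⟨Complex.reCLM.hasFDerivAt.comp ζ hz.complexToReal_fderiv,
    Complex.imCLM.hasFDerivAt.comp ζ hz.complexToReal_fderiv⟩

lemma FnumC_eq {z : ℂ → ℂ} {ζ : ℂ} (hz : DifferentiableAt ℂ z ζ) (ψ : ℂ → ℝ) :
    FnumC z ψ ζ = fderiv ℝ ψ ζ 1 * (deriv z ζ).im + fderiv ℝ ψ ζ Complex.I * (deriv z ζ).re := by
  have h := hasFDerivAt_re_im hz.hasDerivAt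
  simp [FnumC, h.1.fderiv, h.2.fderiv]

lemma FnumC_eventuallyEq {z : ℂ → ℂ} {ζ : ℂ} (hz : AnalyticAt ℂ z ζ) (ψ : ℂ → ℝ) :
    FnumC z ψ =ᶠ[𝓝 ζ] fun w =>
      fderiv ℝ ψ w 1 * (deriv z w).im + fderiv ℝ ψ w Complex.I * (deriv z w).re :=
  hz.eventually_analyticAt.mono fun _ hw => FnumC_eq hw.differentiableAt ψ

lemma contDiffAt_FnumC {z : ℂ → ℂ} {ψ : ℂ → ℝ} {ζ : ℂ} (hz : AnalyticAt ℂ z ζ)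
    (hψ : ContDiffAt ℝ 2 ψ ζ) : ContDiffAt ℝ 1 (FnumC z ψ) ζ := by
  have hw : ContDiffAt ℝ 1 (deriv z) ζ := hz.deriv.restrictScalars.contDiffAt
  have hψ' : ContDiffAt ℝ 1 (fderiv ℝ ψ) ζ := hψ.fderiv_right (by norm_num)
  have hre : ContDiffAt ℝ 1 (fun w => (deriv z w).re) ζ :=
    Complex.reCLM.contDiff.contDiffAt.comp ζ hw
  have him : ContDiffAt ℝ 1 (fun w => (deriv z w).im) ζ :=
    Complex.imCLM.contDiff.contDiffAt.comp ζ hw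
  exact (((hψ'.clm_apply contDiffAt_const).mul him).add
    ((hψ'.clm_apply contDiffAt_const).mul hre)).congr_of_eventuallyEq (FnumC_eventuallyEq hz ψ)

/-- The normal derivative of `FnumC z ψ` at a point of the real axis where the tangential
derivatives of `ψ` and of `Re z` vanish. -/
lemma fderiv_FnumC_I {z : ℂ → ℂ} {ψ : ℂ → ℝ} {ζ : ℂ} (hz : AnalyticAt ℂ z ζ)
    (hψ : ContDiffAt ℝ 2 ψ ζ) (hψ1 : fderiv ℝ ψ ζ 1 = 0) (hre : (deriv z ζ).re = 0) :
    fderiv ℝ (FnumC z ψ) ζ Complex.I =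
      fderiv ℝ (fderiv ℝ ψ) ζ 1 Complex.I * (deriv z ζ).im
        - fderiv ℝ ψ ζ Complex.I * (deriv (deriv z) ζ).im := by
  have hψ' : HasFDerivAt (fderiv ℝ ψ) (fderiv ℝ (fderiv ℝ ψ) ζ) ζ :=
    ((hψ.fderiv_right (m := 1) (by norm_num)).differentiableAt one_ne_zero).hasFDerivAt
  have hsymm : IsSymmSndFDerivAt ℝ ψ ζ := hψ.isSymmSndFDerivAt (by simp)
  have hw := hasFDerivAt_re_im hz.deriv.differentiableAt.hasDerivAt
  have hF := ((hψ'.clm_apply (hasFDerivAt_const (1 : ℂ) ζ)).fun_mul hw.2).fun_add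
    ((hψ'.clm_apply (hasFDerivAt_const Complex.I ζ)).fun_mul hw.1)
  rw [(FnumC_eventuallyEq hz ψ).fderiv_eq, HasFDerivAt.fderiv hF]
  simp [hψ1, hre, hsymm.eq Complex.I 1]
  ring

/-- A smooth function vanishing on the real axis has vanishing tangential derivative there. -/
lemma fderiv_one_eq_zero_of_eq_zero_on_real {U : Set ℂ} (hU : IsOpen U) {ψ : ℂ → ℝ} {α : ℝ}
    (hα : (α : ℂ) ∈ U) (hψ : DifferentiableAt ℝ ψ (α : ℂ))
    (h0 : ∀ α : ℝ, (α : ℂ) ∈ U → ψ (α : ℂ) = 0) : fderiv ℝ ψ (α : ℂ) 1 = 0 := by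
  have hd : HasDerivAt (fun t : ℝ => ψ (t : ℂ)) (fderiv ℝ ψ (α : ℂ) 1) α :=
    hψ.hasFDerivAt.comp_hasDerivAt α Complex.ofRealCLM.hasDerivAt
  have heq : (fun t : ℝ => ψ (t : ℂ)) =ᶠ[𝓝 α] fun _ => 0 := by
    filter_upwards [Complex.continuous_ofReal.continuousAt.eventually_mem (hU.mem_nhds hα)] with t ht
    exact h0 t ht
  exact hd.unique ((hasDerivAt_const α (0 : ℝ)).congr_of_eventuallyEq heq)

/-- Along the real axis, the Bernoulli condition in squared form determines the mixed second
derivative of `ψ` at a point where the profile is vertical. -/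
lemma bernoulli_mixed_deriv {z : ℂ → ℂ} {ψ : ℂ → ℝ} {a G B : ℝ} (hz : AnalyticAt ℂ z (a : ℂ))
    (hψ : ContDiffAt ℝ 2 ψ (a : ℂ)) (hre : (deriv z (a : ℂ)).re = 0)
    (hb : ∀ᶠ α : ℝ in 𝓝 a, fderiv ℝ ψ (α : ℂ) Complex.I ^ 2 =
      2 * (B - G * (z (α : ℂ)).im) * ((deriv z (α : ℂ)).re ^ 2 + (deriv z (α : ℂ)).im ^ 2)) :
    fderiv ℝ ψ (a : ℂ) Complex.I * fderiv ℝ (fderiv ℝ ψ) (a : ℂ) 1 Complex.I =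
      2 * (B - G * (z (a : ℂ)).im) * ((deriv z (a : ℂ)).im * (deriv (deriv z) (a : ℂ)).im)
        - G * (deriv z (a : ℂ)).im ^ 3 := by
  have hψ' : HasFDerivAt (fderiv ℝ ψ) (fderiv ℝ (fderiv ℝ ψ) (a : ℂ)) (a : ℂ) :=
    ((hψ.fderiv_right (m := 1) (by norm_num)).differentiableAt one_ne_zero).hasFDerivAt
  have hS : HasDerivAt (fun α : ℝ => fderiv ℝ ψ (α : ℂ) Complex.I)
      (fderiv ℝ (fderiv ℝ ψ) (a : ℂ) 1 Complex.I) a := by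
    have h := (hψ'.clm_apply (hasFDerivAt_const Complex.I (a : ℂ))).comp_hasDerivAt a
      Complex.ofRealCLM.hasDerivAt
    simp only [Complex.ofRealCLM_apply, Complex.ofReal_one, ContinuousLinearMap.comp_zero,
      zero_add, ContinuousLinearMap.flip_apply] at h
    exact h
  have hz' := hz.differentiableAt.hasDerivAt
  have hw' := hz.deriv.differentiableAt.hasDerivAt
  have hy : HasDerivAt (fun α : ℝ => (z (α : ℂ)).im) (deriv z (a : ℂ)).im a :=
    Complex.imCLM.hasFDerivAt.comp_hasDerivAt a hz'.comp_ofReal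
  have hwim : HasDerivAt (fun α : ℝ => (deriv z (α : ℂ)).im) (deriv (deriv z) (a : ℂ)).im a :=
    Complex.imCLM.hasFDerivAt.comp_hasDerivAt a hw'.comp_ofReal
  have hl := hS.fun_pow 2
  have hr := (((hy.const_mul G).const_sub B).const_mul 2).fun_mul
    ((hw'.real_of_complex.fun_pow 2).fun_add (hwim.fun_pow 2))
  have h := hl.unique (hr.congr_of_eventuallyEq hb)
  simp only [hre] at h
  norm_num at h
  linear_combination h / 2

theorem stmt_13 (U : Set ℂ) (hU : IsOpen U) (α₀ : ℝ) (hα₀ : (α₀ : ℂ) ∈ U)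
    (z : ℂ → ℂ) (hz : DifferentiableOn ℂ z U)
    (ψ : ℂ → ℝ) (hψ : ContDiffOn ℝ (⊤ : ℕ∞) ψ U) (G B : ℝ) (hG : G ≠ 0)
    (ha : ∀ α : ℝ, (α : ℂ) ∈ U → ψ (α : ℂ) = 0)
    (hb : ∀ α : ℝ, (α : ℂ) ∈ U →
      fderiv ℝ ψ (α : ℂ) Complex.I
        = Real.sqrt (2 * (B - G * (z (α : ℂ)).im) *
            ((fderiv ℝ (fun w => (z w).re) (α : ℂ) 1) ^ 2
              + (fderiv ℝ (fun w => (z w).im) (α : ℂ) 1) ^ 2)))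
    (hc : fderiv ℝ (fun w => (z w).re) (α₀ : ℂ) 1 = 0)
    (hd : 0 < fderiv ℝ (fun w => (z w).im) (α₀ : ℂ) 1)
    (he : 0 < B - G * (z (α₀ : ℂ)).im)
    (k : ℕ) (hk2 : 2 ≤ k)
    (hkmin : ∀ j : ℕ, 1 ≤ j → j < k → iteratedDeriv j (fun α : ℝ => (z (α : ℂ)).re) α₀ = 0)
    (hkne : iteratedDeriv k (fun α : ℝ => (z (α : ℂ)).re) α₀ ≠ 0)
    (hkeven : Even k) :
    ∃ ε > (0 : ℝ), ∃ h : ℝ → ℝ,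
      ContDiffOn ℝ 1 h (Set.Ioo (α₀ - ε) (α₀ + ε)) ∧
      h α₀ = 0 ∧
      (∀ α β : ℝ, |α - α₀| < ε → |β| < ε →
        ((α : ℂ) + (β : ℂ) * Complex.I ∈ U ∧
          (FnumC z ψ ((α : ℂ) + (β : ℂ) * Complex.I) = 0 ↔ β = h α))) ∧
      ∃ ε' : ℝ, 0 < ε' ∧ ε' ≤ ε ∧
        (∀ α : ℝ, α ≠ α₀ → |α - α₀| < ε' → h α ≠ 0) ∧
        (∀ α α' : ℝ, α₀ < α → α < α₀ + ε' → α₀ - ε' < α' → α' < α₀ → h α * h α' < 0) := by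
  have hUz : ∀ ζ ∈ U, AnalyticAt ℂ z ζ := fun ζ hζ => hz.analyticAt (hU.mem_nhds hζ)
  have hre : ∀ ζ ∈ U, fderiv ℝ (fun w => (z w).re) ζ 1 = (deriv z ζ).re := fun ζ hζ => by
    simp [(hasFDerivAt_re_im (hUz ζ hζ).differentiableAt.hasDerivAt).1.fderiv]
  have him : ∀ ζ ∈ U, fderiv ℝ (fun w => (z w).im) ζ 1 = (deriv z ζ).im := fun ζ hζ => by
    simp [(hasFDerivAt_re_im (hUz ζ hζ).differentiableAt.hasDerivAt).2.fderiv]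
  have hUψ : ∀ ζ ∈ U, ContDiffAt ℝ 2 ψ ζ := fun ζ hζ =>
    (hψ.contDiffAt (hU.mem_nhds hζ)).of_le (WithTop.coe_le_coe.2 le_top)
  have hψ1 : ∀ α : ℝ, (α : ℂ) ∈ U → fderiv ℝ ψ (α : ℂ) 1 = 0 := fun α hα =>
    fderiv_one_eq_zero_of_eq_zero_on_real hU hα
      ((hUψ _ hα).differentiableAt two_ne_zero) ha
  have hUev : ∀ᶠ α : ℝ in 𝓝 α₀, (α : ℂ) ∈ U :=
    Complex.continuous_ofReal.continuousAt.eventually_mem (hU.mem_nhds hα₀)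
  have hzα := hUz _ hα₀
  have hψα := hUψ _ hα₀
  rw [hre _ hα₀] at hc
  rw [him _ hα₀] at hd
  -- `ψ_β` is positive at the base point, hence nearby on the axis.
  have hQ0 : 0 < fderiv ℝ ψ (α₀ : ℂ) Complex.I := by
    rw [hb _ hα₀, hre _ hα₀, him _ hα₀, hc]
    positivity
  have hQ : ∀ᶠ α : ℝ in 𝓝 α₀, 0 < fderiv ℝ ψ (α : ℂ) Complex.I := by
    have hcont : ContinuousAt (fun ζ => fderiv ℝ ψ ζ Complex.I) (α₀ : ℂ) :=
      (hψα.fderiv_right (m := 1) (by norm_num)).continuousAt.clm_apply continuousAt_const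
    exact (hcont.comp Complex.continuous_ofReal.continuousAt).eventually_const_lt hQ0
  have hbsq : ∀ᶠ α : ℝ in 𝓝 α₀, fderiv ℝ ψ (α : ℂ) Complex.I ^ 2 =
      2 * (B - G * (z (α : ℂ)).im) *
        ((deriv z (α : ℂ)).re ^ 2 + (deriv z (α : ℂ)).im ^ 2) := by
    filter_upwards [hUev, hQ] with α hα hpos
    have hbα := hb α hα
    rw [hre _ hα, him _ hα] at hbα
    rw [hbα] at hpos ⊢
    exact Real.sq_sqrt (Real.sqrt_pos.1 hpos).le
  have hmixed := bernoulli_mixed_deriv hzα hψα hc hbsq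
  have hnormal := fderiv_FnumC_I hzα hψα (hψ1 _ hα₀) hc
  have hne : fderiv ℝ (FnumC z ψ) (α₀ : ℂ) Complex.I ≠ 0 := by
    intro h
    have hsq := hbsq.self_of_nhds
    rw [hnormal] at h
    rw [hc] at hsq
    have : G * (deriv z (α₀ : ℂ)).im ^ 4 = 0 := by
      linear_combination (deriv z (α₀ : ℂ)).im * hmixed
        - fderiv ℝ ψ (α₀ : ℂ) Complex.I * h - (deriv (deriv z) (α₀ : ℂ)).im * hsq
    exact mul_ne_zero hG (pow_ne_zero 4 hd.ne') this
  -- Pass to real coordinates and apply the implicit function theorem.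
  let L : ℝ × ℝ →L[ℝ] ℂ := Complex.equivRealProdCLM.symm
  have hL : ∀ α β : ℝ, L (α, β) = (α : ℂ) + (β : ℂ) * Complex.I := fun α β =>
    Complex.equivRealProd_symm_apply (α, β)
  have hL0 : ∀ α : ℝ, L (α, 0) = α := fun α => by simp [hL]
  have hF := contDiffAt_FnumC hzα hψα
  rw [← hL0] at hF
  have hcd : ContDiffAt ℝ 1 (FnumC z ψ ∘ L) (α₀, 0) := hF.comp _ L.contDiff.contDiffAt
  have haxis : ∀ α : ℝ, (α : ℂ) ∈ U → (FnumC z ψ ∘ L) (α, 0) =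
      fderiv ℝ ψ (α : ℂ) Complex.I * (deriv z (α : ℂ)).re := fun α hα => by
    rw [Function.comp_apply, hL0, FnumC_eq (hUz _ hα).differentiableAt, hψ1 α hα]
    ring
  have hfd : fderiv ℝ (FnumC z ψ ∘ L) (α₀, 0) (0, 1) =
      fderiv ℝ (FnumC z ψ) (α₀ : ℂ) Complex.I := by
    rw [((hF.differentiableAt one_ne_zero).hasFDerivAt.comp _ L.hasFDerivAt).fderiv]
    simp [hL]
  obtain ⟨h, hh, hh0, hiff, hsign⟩ := exists_implicit_function_sign hcd
    (by rw [haxis _ hα₀, hc, mul_zero]) hfd hne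
  set c := fderiv ℝ (FnumC z ψ) (α₀ : ℂ) Complex.I
  have hx : AnalyticAt ℝ (fun α : ℝ => (z (α : ℂ)).re) α₀ :=
    (Complex.reCLM.analyticAt _).comp
      (hzα.restrictScalars.comp (Complex.ofRealCLM.analyticAt α₀))
  obtain ⟨q, -, hq⟩ := exists_deriv_mul_sub_pos hx (by omega) hkmin hkne hkeven
  have hmul : ∀ᶠ α in 𝓝 α₀, α ≠ α₀ → h α * (c * q * (α - α₀)) < 0 := by
    filter_upwards [hUev, hQ, hsign, hq] with α hα hQα hsα hqα hne'
    have hqα := hqα hne'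
    rw [(hUz _ hα).differentiableAt.hasDerivAt.real_of_complex.deriv] at hqα
    rw [haxis α hα] at hsα
    have hx0 : (deriv z (α : ℂ)).re ≠ 0 := by
      rintro h0
      simp [h0] at hqα
    have hsα := hsα (mul_ne_zero hQα.ne' hx0)
    have hprod := mul_neg_of_neg_of_pos hsα hqα
    have hpos : 0 < fderiv ℝ ψ (α : ℂ) Complex.I * (deriv z (α : ℂ)).re ^ 2 := by positivity
    refine neg_of_mul_neg_right (a := fderiv ℝ ψ (α : ℂ) Complex.I * (deriv z (α : ℂ)).re ^ 2)
      ?_ hpos.le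
    calc _ = _ := by ring
      _ < 0 := hprod
  have hLU : ∀ᶠ v in 𝓝 ((α₀, 0) : ℝ × ℝ), L v ∈ U :=
    L.continuous.continuousAt.eventually_mem (hU.mem_nhds (by rwa [hL0]))
  obtain ⟨ε₁, hε₁, hbox⟩ := Metric.eventually_nhds_iff.1 (hLU.and hiff)
  obtain ⟨ε₂, hε₂, hnear⟩ := Metric.eventually_nhds_iff.1
    ((hh.eventually (by simp)).and hmul)
  simp only [Real.dist_eq] at hnear
  have hlt : ∀ {α}, |α - α₀| < min ε₁ ε₂ → |α - α₀| < ε₂ := fun hα => hα.trans_le (min_le_right _ _)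
  refine ⟨min ε₁ ε₂, lt_min hε₁ hε₂, h, fun α hα => ?_, hh0, fun α β hα hβ => ?_,
    min ε₁ ε₂, lt_min hε₁ hε₂, le_rfl, fun α hne' hα h0 => ?_, fun α α' h1 h2 h3 h4 => ?_⟩
  · refine (hnear (hlt ?_)).1.contDiffWithinAt
    rw [abs_lt]
    constructor <;> linarith [hα.1, hα.2]
  · have hd : dist ((α, β) : ℝ × ℝ) (α₀, 0) < ε₁ := by
      rw [Prod.dist_eq, max_lt_iff, Real.dist_eq, Real.dist_eq, sub_zero]
      exact ⟨hα.trans_le (min_le_left _ _), hβ.trans_le (min_le_left _ _)⟩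
    simpa [hL] using hbox hd
  · simpa [h0] using (hnear (hlt hα)).2 hne'
  · have hr := (hnear (y := α) (hlt (by rw [abs_lt]; constructor <;> linarith))).2 h1.ne'
    have hl := (hnear (y := α') (hlt (by rw [abs_lt]; constructor <;> linarith))).2 h4.ne
    have hprod := mul_pos_of_neg_of_neg hr hl
    have hneg : (c * q) ^ 2 * ((α - α₀) * (α' - α₀)) ≤ 0 :=
      mul_nonpos_of_nonneg_of_nonpos (sq_nonneg _)
        (mul_nonpos_of_nonneg_of_nonpos (by linarith) (by linarith))
    refine neg_of_mul_pos_left ?_ hneg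
    calc 0 < _ := hprod
      _ = _ := by ring
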